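/- Let P ⊆ ℝⁿ be a Delone set of finite local complexity, let k ≥ 1 be an integer, and let φ : ℝⁿ → ℝ be a C^k function whose differential dφ is strongly P-equivariant. Then the following are equivalent: (a) for every ε > 0 there exists a strongly P-equivariant C^k function φ_ε : ℝⁿ → ℝ such that sup over x ∈ ℝⁿ and all multi-indices α with |α| ≤ k of |D^α(φ − φ_ε)(x)| is less than ε; (b) for every ε > 0 there exists a finite partition of P into pairwise disjoint subsets P_1, …, P_N, each locally derivable from P, such that for every i ∈ {1, …, N} and all p, q ∈ P_i one has |φ(p) − φ(q)| < ε. -/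

import Mathlib

open Metric Set

noncomputable section

/-- Euclidean space ℝⁿ. -/
abbrev Euc (n : ℕ) := EuclideanSpace ℝ (Fin n)

/-- The translate `P - x = {p - x : p ∈ P}`. -/
def shiftSet {n : ℕ} (P : Set (Euc n)) (x : Euc n) : Set (Euc n) :=
  (fun p => p - x) '' P

/-- The `r`-patch of `P` around `x`: `B_r[P - x] = B(0,r) ∩ (P - x)`. -/
def patch {n : ℕ} (P : Set (Euc n)) (r : ℝ) (x : Euc n) : Set (Euc n) :=
  ball (0 : Euc n) r ∩ shiftSet P x

/-- `P` is uniformly discrete: there is a positive minimal distance between points. -/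
def UnifDiscrete {n : ℕ} (P : Set (Euc n)) : Prop :=
  ∃ δ > 0, ∀ p ∈ P, ∀ q ∈ P, p ≠ q → δ ≤ ‖p - q‖

/-- `P` is relatively dense: every ball of radius `R` contains a point of `P`. -/
def RelDense {n : ℕ} (P : Set (Euc n)) : Prop :=
  ∃ R > 0, ∀ x : Euc n, ∃ p ∈ P, ‖p - x‖ < R

/-- `P` has finite local complexity: for each `r > 0`, only finitely many `r`-patches
around points of `P`. -/
def FLC {n : ℕ} (P : Set (Euc n)) : Prop :=
  ∀ r > 0, {s : Set (Euc n) | ∃ x ∈ P, s = patch P r x}.Finite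

/-- `f` is `P`-equivariant with range `R`. -/
def EquivRange {n : ℕ} {F : Type*} (P : Set (Euc n)) (R : ℝ) (f : Euc n → F) : Prop :=
  ∀ x y : Euc n, patch P R x = patch P R y → f x = f y

/-- `f` is strongly `P`-equivariant: `P`-equivariant with some finite range `R > 0`. -/
def StrongEquiv {n : ℕ} {F : Type*} (P : Set (Euc n)) (f : Euc n → F) : Prop :=
  ∃ R > 0, EquivRange P R f

/-- `f`, viewed as a function on the subset `Q`, is `P`-equivariant with range `R`. -/
def EquivRangeOn {n : ℕ} {F : Type*} (P Q : Set (Euc n)) (R : ℝ) (f : Euc n → F) : Prop :=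
  ∀ x ∈ Q, ∀ y ∈ Q, patch P R x = patch P R y → f x = f y

/-- `f`, viewed as a function on the subset `Q`, is strongly `P`-equivariant. -/
def StrongEquivOn {n : ℕ} {F : Type*} (P Q : Set (Euc n)) (f : Euc n → F) : Prop :=
  ∃ R > 0, EquivRangeOn P Q R f

/-- `Q` is locally derivable from `P`. -/
def LocallyDerivable {n : ℕ} (P Q : Set (Euc n)) : Prop :=
  ∃ R > 0, ∀ x y : Euc n, patch P R x = patch P R y →
    ({0} : Set (Euc n)) ∩ shiftSet Q x = ({0} : Set (Euc n)) ∩ shiftSet Q y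

/-- Hypothesis (H): for every `r > 0` there is `r' > 0` such that for all `x`,
`B(φ(x), r) ∩ φ(P) ⊆ φ(B(x, r') ∩ P)`. -/
def HypoH {n : ℕ} (P : Set (Euc n)) (φ : Euc n → Euc n) : Prop :=
  ∀ r > 0, ∃ r' > 0, ∀ x : Euc n, ball (φ x) r ∩ (φ '' P) ⊆ φ '' (ball x r' ∩ P)

/-- The pattern metric `D` on closed subsets of ℝⁿ. -/
def patternDist {n : ℕ} (A B : Set (Euc n)) : ℝ :=
  sInf {ε : ℝ | 0 < ε ∧ Metric.hausdorffDist
    ((ball (0 : Euc n) (1 / ε) ∩ A) ∪ sphere (0 : Euc n) (1 / ε))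
    ((ball (0 : Euc n) (1 / ε) ∩ B) ∪ sphere (0 : Euc n) (1 / ε)) ≤ ε}

/-- A continuous `f : ℝⁿ → ℝⁿ` is weakly `P`-equivariant if it is uniformly approximated
by strongly `P`-equivariant continuous functions. -/
def WeakEquiv {n : ℕ} (P : Set (Euc n)) (f : Euc n → Euc n) : Prop :=
  ∀ ε > 0, ∃ g : Euc n → Euc n, Continuous g ∧ StrongEquiv P g ∧ ∀ x : Euc n, ‖f x - g x‖ < ε

/-- `P` is aperiodic: the only translation fixing `P` is `0`. -/
def IsAperiodicSet {n : ℕ} (P : Set (Euc n)) : Prop :=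
  ∀ x : Euc n, shiftSet P x = P → x = 0


/-!
Both conditions say that the restriction of `φ` to `P` is a uniform limit of functions `c` on `P`
that depend only on a patch. By finite local complexity, the level sets of the patch map on `P` form
a finite partition, and `c` is constant on each of them. Conversely, the members of a finite
partition into locally derivable sets are all recognized by patches of one common radius, and `c p`
can be taken to be the value of `φ` at a representative of the patch of `p`.

Given such a `c`, let `w p`, for `p ∈ P`, be the partition of unity obtained by normalizing the
translates of a bump function to the points of `P`, and set `φ' = φ - ∑ p, w p • (φ p - c p)`. Up to
translation there are only finitely many `w p`, so that their derivatives are uniformly bounded and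
`φ - φ'` is small in `C^k` as soon as `φ - c` is small on `P`. If `x` and `y` have equal large
patches, then so do `x + v` and `y + v` for small `v`, whence `φ` has the same increments from `x`
and from `y`, because `dφ` is strongly equivariant. Hence the values of `φ - c` on the two patches
differ by the constant `φ x - φ y`. Averaging preserves this constant, so it cancels in `φ'`.
-/

section Calculus

variable {E F : Type*} [NormedAddCommGroup E] [NormedSpace ℝ E]
  [NormedAddCommGroup F] [NormedSpace ℝ F]

lemma sub_eq_sub_of_fderiv_add_eq {f : E → F} (hf : Differentiable ℝ f) {r : ℝ} {x y : E}
    (h : ∀ v, ‖v‖ < r → fderiv ℝ f (x + v) = fderiv ℝ f (y + v)) {u : E} (hu : ‖u‖ < r) :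
    f (x + u) - f x = f (y + u) - f y := by
  have hd (z : E) : DifferentiableOn ℝ (fun v => f (z + v)) (ball 0 r) :=
    (hf.comp (differentiable_id.const_add z)).differentiableOn
  obtain ⟨t, ht⟩ := isOpen_ball.exists_eq_add_of_fderiv_eq (convex_ball 0 r).isPreconnected
    (hd x) (hd y) fun v hv => by
      simpa only [fderiv_comp_add_left] using h v (mem_ball_zero_iff.1 hv)
  have hxy : f x = f y + t := by
    simpa using ht (mem_ball_self ((norm_nonneg u).trans_lt hu))
  have hxyu : f (x + u) = f (y + u) + t := ht (mem_ball_zero_iff.2 hu)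
  rw [hxy, hxyu, add_sub_add_right_eq_sub]

lemma exists_norm_iteratedFDeriv_le_of_finite {S : Set (E → F)} (hS : S.Finite) {k : ℕ}
    (hcont : ∀ f ∈ S, ContDiff ℝ k f) (hsupp : ∀ f ∈ S, HasCompactSupport f) :
    ∃ M > 0, ∀ f ∈ S, ∀ i ≤ k, ∀ x, ‖iteratedFDeriv ℝ i f x‖ ≤ M := by
  have hbound : ∀ᶠ M : ℝ in Filter.atTop, ∀ f ∈ S, ∀ i ∈ Iic k, ∀ x,
      ‖iteratedFDeriv ℝ i f x‖ ≤ M := by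
    refine (Filter.eventually_all_finite hS).2 fun f hf =>
      (Filter.eventually_all_finite (finite_Iic k)).2 fun i hi => ?_
    obtain ⟨C, hC⟩ := ((hcont f hf).continuous_iteratedFDeriv
      (by exact_mod_cast hi)).bounded_above_of_compact_support ((hsupp f hf).iteratedFDeriv i)
    filter_upwards [Filter.eventually_ge_atTop C] with M hM x using (hC x).trans hM
  obtain ⟨M, hM, hpos⟩ := (hbound.and (Filter.eventually_gt_atTop 0)).exists
  exact ⟨M, hpos, hM⟩

end Calculus

section Patches

variable {n : ℕ} {P : Set (Euc n)}

lemma mem_patch_iff {r : ℝ} {x u : Euc n} : u ∈ patch P r x ↔ ‖u‖ < r ∧ x + u ∈ P := by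
  simp only [patch, shiftSet, mem_inter_iff, mem_ball_zero_iff, mem_image, sub_eq_iff_eq_add',
    exists_eq_right]

lemma image_add_patch (r : ℝ) (x : Euc n) : (x + ·) '' patch P r x = P ∩ ball x r := by
  ext p
  simp only [image_add_left, mem_preimage, mem_patch_iff, mem_inter_iff, mem_ball_iff_norm',
    neg_add_eq_sub, add_sub_cancel, norm_sub_rev p x, and_comm]

lemma patch_add_eq_patch_add {T r : ℝ} {x y u : Euc n} (h : patch P T x = patch P T y)
    (hu : ‖u‖ + r ≤ T) : patch P r (x + u) = patch P r (y + u) := by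
  ext v
  simp only [mem_patch_iff, and_congr_right_iff, add_assoc]
  intro hv
  have hT : ‖u + v‖ < T := (norm_add_le u v).trans_lt (by linarith)
  simpa only [mem_patch_iff, hT, true_and] using Set.ext_iff.1 h (u + v)

lemma patch_eq_of_le {T r : ℝ} {x y : Euc n} (h : patch P T x = patch P T y) (hr : r ≤ T) :
    patch P r x = patch P r y := by
  simpa using patch_add_eq_patch_add (u := 0) h (by simpa using hr)

lemma FLC.finite_image {β : Type*} (hFLC : FLC P) {f : Euc n → β} (hf : StrongEquivOn P P f) :
    (f '' P).Finite := by
  obtain ⟨R, hR, hfR⟩ := hf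
  refine ((hFLC R hR).image (f ∘ Function.invFunOn (patch P R) P)).subset ?_
  rintro _ ⟨p, hp, rfl⟩
  have hex : ∃ q ∈ P, patch P R q = patch P R p := ⟨p, hp, rfl⟩
  exact ⟨patch P R p, ⟨p, hp, rfl⟩,
    hfR _ (Function.invFunOn_mem hex) p hp (Function.invFunOn_eq hex)⟩

lemma UnifDiscrete.finite_inter_ball (hUD : UnifDiscrete P) (x : Euc n) (r : ℝ) :
    (P ∩ ball x r).Finite := by
  obtain ⟨δ, hδ, hP⟩ := hUD
  simp only [← dist_eq_norm] at hP
  have hdiscrete : DiscreteTopology P := DiscreteTopology.of_forall_le_dist hδ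
    fun p q hpq => hP p p.2 q q.2 (Subtype.coe_injective.ne hpq)
  rw [inter_comm]
  exact finite_isBounded_inter_isClosed ⟨hdiscrete⟩ isBounded_ball
    (isClosed_of_pairwise_le_dist hδ hP)

lemma exists_ncard_inter_ball_le (hUD : UnifDiscrete P) (hRD : RelDense P) (hFLC : FLC P)
    {r : ℝ} (hr : 0 < r) : ∃ K : ℕ, ∀ x, (P ∩ ball x r).ncard ≤ K := by
  obtain ⟨R, hR, hRP⟩ := hRD
  have hequiv : StrongEquivOn P P fun p => (P ∩ ball p (r + R)).ncard := by
    refine ⟨r + R, by positivity, fun p _ q _ hpq => ?_⟩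
    simp only [← image_add_patch, ncard_image_of_injective _ (add_right_injective _), hpq]
  obtain ⟨K, hK⟩ := (hFLC.finite_image hequiv).bddAbove
  refine ⟨K, fun x => ?_⟩
  obtain ⟨p, hp, hpx⟩ := hRP x
  have hball : ball x r ⊆ ball p (r + R) := ball_subset_ball' (by
    rw [dist_comm, dist_eq_norm]
    gcongr)
  calc (P ∩ ball x r).ncard
      ≤ (P ∩ ball p (r + R)).ncard :=
        ncard_le_ncard (inter_subset_inter_right _ hball) (hUD.finite_inter_ball _ _)
    _ ≤ K := hK ⟨p, hp, rfl⟩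

end Patches

section LocallyFiniteSums

variable {n : ℕ} {P : Set (Euc n)}

lemma finsum_mem_eq_finsum_mem_patch {M : Type*} [AddCommMonoid M] {f : Euc n → M} {r : ℝ}
    {x : Euc n} (hf : ∀ p, r ≤ dist p x → f p = 0) :
    ∑ᶠ p ∈ P, f p = ∑ᶠ u ∈ patch P r x, f (x + u) := by
  rw [← finsum_mem_image (f := f) (add_right_injective x).injOn, image_add_patch]
  refine finsum_mem_inter_support_eq' f _ _ fun p hp => ?_
  have hpx : p ∈ ball x r := mem_ball.2 (not_le.1 fun h => hp (hf p h))
  exact (and_iff_left hpx).symm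

lemma finsum_mem_eq_of_patch_eq {M : Type*} [AddCommMonoid M] {f g : Euc n → M} {r : ℝ}
    {x y : Euc n} (hf : ∀ p, r ≤ dist p x → f p = 0) (hg : ∀ p, r ≤ dist p y → g p = 0)
    (hxy : patch P r x = patch P r y) (hfg : ∀ u ∈ patch P r x, f (x + u) = g (y + u)) :
    ∑ᶠ p ∈ P, f p = ∑ᶠ p ∈ P, g p := by
  rw [finsum_mem_eq_finsum_mem_patch hf, finsum_mem_eq_finsum_mem_patch hg, ← hxy]
  exact finsum_mem_congr rfl hfg

lemma UnifDiscrete.finite_inter_support {M : Type*} [Zero M] (hUD : UnifDiscrete P)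
    {f : Euc n → M} {r : ℝ} {x : Euc n} (hf : ∀ p, r ≤ dist p x → f p = 0) :
    (P ∩ Function.support f).Finite :=
  (hUD.finite_inter_ball x r).subset
    (inter_subset_inter_right _ fun p hp => mem_ball.2 (not_le.1 fun h => hp (hf p h)))

lemma UnifDiscrete.finsum_mem_eventuallyEq {M : Type*} [AddCommMonoid M] (hUD : UnifDiscrete P)
    {f : Euc n → Euc n → M} {r : ℝ} (hf : ∀ p x, r ≤ dist p x → f p x = 0) (x₀ : Euc n) :
    (fun x => ∑ᶠ p ∈ P, f p x) =ᶠ[nhds x₀]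
      fun x => ∑ p ∈ (hUD.finite_inter_ball x₀ (r + 1)).toFinset, f p x := by
  filter_upwards [ball_mem_nhds x₀ one_pos] with x hx
  rw [← finsum_mem_eq_finite_toFinset_sum]
  refine finsum_mem_inter_support_eq' (fun p => f p x) _ _ fun p hp => ?_
  have hpx : dist p x < r := not_le.1 fun h => hp (hf p x h)
  have hpx₀ : p ∈ ball x₀ (r + 1) :=
    mem_ball.2 ((dist_triangle p x x₀).trans_lt (add_lt_add hpx hx))
  exact (and_iff_left hpx₀).symm

variable {F : Type*} [NormedAddCommGroup F] [NormedSpace ℝ F]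

lemma UnifDiscrete.contDiff_finsum_mem (hUD : UnifDiscrete P) {f : Euc n → Euc n → F} {r : ℝ}
    (hf : ∀ p x, r ≤ dist p x → f p x = 0) {k : WithTop ℕ∞} (hcont : ∀ p ∈ P, ContDiff ℝ k (f p)) :
    ContDiff ℝ k fun x => ∑ᶠ p ∈ P, f p x := by
  refine contDiff_iff_contDiffAt.2 fun x₀ =>
    ContDiffAt.congr_of_eventuallyEq ?_ (hUD.finsum_mem_eventuallyEq hf x₀)
  exact ContDiffAt.sum fun p hp => (hcont p ((Finite.mem_toFinset _).1 hp).1).contDiffAt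

lemma exists_norm_iteratedFDeriv_finsum_mem_le (hUD : UnifDiscrete P) (hRD : RelDense P)
    (hFLC : FLC P) {r : ℝ} (hr : 0 < r) :
    ∃ K > 0, ∀ (f : Euc n → Euc n → F), (∀ p x, r ≤ dist p x → f p x = 0) →
      ∀ (i : ℕ), (∀ p ∈ P, ContDiff ℝ i (f p)) →
      ∀ (B : ℝ), (∀ p ∈ P, ∀ x, ‖iteratedFDeriv ℝ i (f p) x‖ ≤ B) →
      ∀ x, ‖iteratedFDeriv ℝ i (fun z => ∑ᶠ p ∈ P, f p z) x‖ ≤ K * B := by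
  obtain ⟨K, hK⟩ := exists_ncard_inter_ball_le hUD hRD hFLC (add_pos hr one_pos)
  obtain ⟨p₀, hp₀⟩ : P.Nonempty := let ⟨_, _, h⟩ := hRD; ⟨(h 0).choose, (h 0).choose_spec.1⟩
  refine ⟨K + 1, by positivity, fun f hf i hcont B hB x => ?_⟩
  have hB0 : 0 ≤ B := (norm_nonneg _).trans (hB p₀ hp₀ x)
  have hfin := hUD.finite_inter_ball x (r + 1)
  have hmem {p : Euc n} (hp : p ∈ hfin.toFinset) : p ∈ P := (hfin.mem_toFinset.1 hp).1
  have hcard : (hfin.toFinset.card : ℝ) ≤ K + 1 := by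
    rw [← ncard_eq_toFinset_card _ hfin]
    exact_mod_cast (hK x).trans (Nat.le_succ K)
  rw [((hUD.finsum_mem_eventuallyEq hf x).iteratedFDeriv ℝ i).self_of_nhds,
    iteratedFDeriv_fun_sum_apply fun p hp => (hcont p (hmem hp)).contDiffAt]
  calc ‖∑ p ∈ hfin.toFinset, iteratedFDeriv ℝ i (f p) x‖
      ≤ ∑ _ ∈ hfin.toFinset, B := norm_sum_le_of_le _ fun _ hp => hB _ (hmem hp) x
    _ = hfin.toFinset.card * B := by rw [Finset.sum_const, nsmul_eq_mul]
    _ ≤ (K + 1) * B := by gcongr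

end LocallyFiniteSums

section PartitionOfUnity

variable {n : ℕ}

/-- The sum of the translates of the bump function `ρ` to the points of `P`, by which these
translates are normalized. -/
def bumpTotal (P : Set (Euc n)) (ρ : ContDiffBump (0 : Euc n)) (x : Euc n) : ℝ :=
  ∑ᶠ p ∈ P, ρ (p - x)

/-- The members of the partition of unity subordinate to `P` obtained by normalizing the translates
of the bump function `ρ` to the points of `P`. It is defined for all `p`, but only those with
`p ∈ P` belong to the partition of unity. -/
def bumpWeight (P : Set (Euc n)) (ρ : ContDiffBump (0 : Euc n)) (p x : Euc n) : ℝ :=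
  ρ (p - x) / bumpTotal P ρ x

variable {P : Set (Euc n)} {ρ : ContDiffBump (0 : Euc n)}

lemma bump_sub_eq_zero {p x : Euc n} (h : ρ.rOut ≤ dist p x) : ρ (p - x) = 0 :=
  ρ.zero_of_le_dist (by rwa [dist_zero_right, ← dist_eq_norm])

lemma bumpWeight_eq_zero {p x : Euc n} (h : ρ.rOut ≤ dist p x) : bumpWeight P ρ p x = 0 := by
  rw [bumpWeight, bump_sub_eq_zero h, zero_div]

lemma equivRange_bumpTotal : EquivRange P ρ.rOut (bumpTotal P ρ) := fun x y hxy =>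
  finsum_mem_eq_of_patch_eq (fun _ => bump_sub_eq_zero) (fun _ => bump_sub_eq_zero) hxy
    fun u _ => by rw [add_sub_cancel_left, add_sub_cancel_left]

lemma bumpWeight_add_eq_bumpWeight_add {x y : Euc n}
    (hxy : patch P ρ.rOut x = patch P ρ.rOut y) (u : Euc n) :
    bumpWeight P ρ (x + u) x = bumpWeight P ρ (y + u) y := by
  rw [bumpWeight, bumpWeight, equivRange_bumpTotal x y hxy, add_sub_cancel_left,
    add_sub_cancel_left]

lemma contDiff_bumpTotal (hUD : UnifDiscrete P) {k : ℕ} : ContDiff ℝ k (bumpTotal P ρ) :=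
  hUD.contDiff_finsum_mem (fun _ _ => bump_sub_eq_zero) fun _ _ =>
    ρ.contDiff.comp (contDiff_const.sub contDiff_id)

lemma bumpTotal_pos (hUD : UnifDiscrete P) (hρ : ∀ x, ∃ p ∈ P, ‖p - x‖ < ρ.rOut) (x : Euc n) :
    0 < bumpTotal P ρ x := by
  obtain ⟨p, hp, hpx⟩ := hρ x
  have hpos : 0 < ρ (p - x) := ρ.pos_of_mem_ball (mem_ball_zero_iff.2 hpx)
  refine finsum_cond_pos (fun _ _ => ρ.nonneg) ⟨p, hp, hpos⟩ ?_
  rw [inter_comm]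
  exact hUD.finite_inter_support fun _ => bump_sub_eq_zero

lemma contDiff_bumpWeight (hUD : UnifDiscrete P) (hρ : ∀ x, ∃ p ∈ P, ‖p - x‖ < ρ.rOut) {k : ℕ}
    (p : Euc n) : ContDiff ℝ k (bumpWeight P ρ p) :=
  (ρ.contDiff.comp (contDiff_const.sub contDiff_id)).div (contDiff_bumpTotal hUD)
    fun x => (bumpTotal_pos hUD hρ x).ne'

lemma finsum_mem_bumpWeight (hUD : UnifDiscrete P) (hρ : ∀ x, ∃ p ∈ P, ‖p - x‖ < ρ.rOut)
    (x : Euc n) : ∑ᶠ p ∈ P, bumpWeight P ρ p x = 1 := by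
  simp only [bumpWeight, div_eq_mul_inv]
  rw [← finsum_mem_mul]
  exact mul_inv_cancel₀ (bumpTotal_pos hUD hρ x).ne'

lemma hasCompactSupport_bumpWeight (p : Euc n) : HasCompactSupport (bumpWeight P ρ p) :=
  HasCompactSupport.intro (isCompact_closedBall p ρ.rOut) fun x hx =>
    bumpWeight_eq_zero (by
      rw [mem_closedBall, dist_comm, not_le] at hx
      exact hx.le)

lemma FLC.finite_translates_bumpWeight (hFLC : FLC P) :
    ((fun p z => bumpWeight P ρ p (p + z)) '' P).Finite := by
  refine hFLC.finite_image
    ⟨ρ.rOut + ρ.rOut, add_pos ρ.rOut_pos ρ.rOut_pos, fun p _ q _ hpq => funext fun z => ?_⟩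
  rcases le_total ‖z‖ ρ.rOut with hz | hz
  · simpa only [add_neg_cancel_right] using bumpWeight_add_eq_bumpWeight_add
      (patch_add_eq_patch_add hpq (add_le_add_left hz ρ.rOut)) (-z)
  · have hdist (p : Euc n) : ρ.rOut ≤ dist p (p + z) := by rwa [dist_self_add_right]
    exact (bumpWeight_eq_zero (hdist p)).trans (bumpWeight_eq_zero (hdist q)).symm

lemma exists_norm_iteratedFDeriv_bumpWeight_le (hUD : UnifDiscrete P) (hFLC : FLC P)
    (hρ : ∀ x, ∃ p ∈ P, ‖p - x‖ < ρ.rOut) (k : ℕ) :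
    ∃ M > 0, ∀ p ∈ P, ∀ i ≤ k, ∀ x, ‖iteratedFDeriv ℝ i (bumpWeight P ρ p) x‖ ≤ M := by
  have hcont : ∀ f ∈ (fun p z => bumpWeight P ρ p (p + z)) '' P, ContDiff ℝ k f :=
    forall_mem_image.2 fun p _ =>
      (contDiff_bumpWeight hUD hρ p).comp (contDiff_const.add contDiff_id)
  have hsupp : ∀ f ∈ (fun p z => bumpWeight P ρ p (p + z)) '' P, HasCompactSupport f :=
    forall_mem_image.2 fun p _ =>
      (hasCompactSupport_bumpWeight p).comp_homeomorph (Homeomorph.addLeft p)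
  obtain ⟨M, hM, hbound⟩ :=
    exists_norm_iteratedFDeriv_le_of_finite hFLC.finite_translates_bumpWeight hcont hsupp
  refine ⟨M, hM, fun p hp i hi x => ?_⟩
  simpa [iteratedFDeriv_comp_add_left] using hbound _ (mem_image_of_mem _ hp) i hi (x - p)

end PartitionOfUnity

section BumpAverage

variable {n : ℕ} {F : Type*} [NormedAddCommGroup F] [NormedSpace ℝ F]

/-- The average near `x` of the values of `a` on `P`, with respect to the partition of unity
`bumpWeight P ρ`. It turns the function `a` on `P` into a smooth function. -/
def bumpAverage (P : Set (Euc n)) (ρ : ContDiffBump (0 : Euc n)) (a : Euc n → F) (x : Euc n) : F :=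
  ∑ᶠ p ∈ P, bumpWeight P ρ p x • a p

variable {P : Set (Euc n)} {ρ : ContDiffBump (0 : Euc n)}

lemma bumpWeight_smul_eq_zero (a : F) {p x : Euc n} (h : ρ.rOut ≤ dist p x) :
    bumpWeight P ρ p x • a = 0 := by
  rw [bumpWeight_eq_zero h, zero_smul]

lemma contDiff_bumpAverage (hUD : UnifDiscrete P) (hρ : ∀ x, ∃ p ∈ P, ‖p - x‖ < ρ.rOut)
    (a : Euc n → F) {k : ℕ} : ContDiff ℝ k (bumpAverage P ρ a) :=
  hUD.contDiff_finsum_mem (fun p _ => bumpWeight_smul_eq_zero (a p)) fun p _ =>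
    (contDiff_bumpWeight hUD hρ p).smul contDiff_const

lemma bumpAverage_eq_of_patch_eq {a b : Euc n → F} {x y : Euc n}
    (hxy : patch P ρ.rOut x = patch P ρ.rOut y)
    (hab : ∀ u ∈ patch P ρ.rOut x, a (x + u) = b (y + u)) :
    bumpAverage P ρ a x = bumpAverage P ρ b y :=
  finsum_mem_eq_of_patch_eq (fun p => bumpWeight_smul_eq_zero (a p))
    (fun p => bumpWeight_smul_eq_zero (b p)) hxy fun u hu => by
      rw [bumpWeight_add_eq_bumpWeight_add hxy, hab u hu]

lemma bumpAverage_add_const (hUD : UnifDiscrete P) (hρ : ∀ x, ∃ p ∈ P, ‖p - x‖ < ρ.rOut)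
    (a : Euc n → F) (t : F) (x : Euc n) :
    bumpAverage P ρ (fun p => a p + t) x = bumpAverage P ρ a x + t := by
  have ht : ∑ᶠ p ∈ P, bumpWeight P ρ p x • t = t := by
    simp only [← finsum_smul, finsum_mem_bumpWeight hUD hρ, one_smul]
  simp only [bumpAverage, smul_add]
  rw [finsum_mem_add_distrib' (hUD.finite_inter_support fun p => bumpWeight_smul_eq_zero (a p))
    (hUD.finite_inter_support fun _ => bumpWeight_smul_eq_zero t), ht]

lemma exists_norm_iteratedFDeriv_bumpAverage_le (hUD : UnifDiscrete P) (hRD : RelDense P)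
    (hFLC : FLC P) (hρ : ∀ x, ∃ p ∈ P, ‖p - x‖ < ρ.rOut) (k : ℕ) :
    ∃ C > 0, ∀ (a : Euc n → F) (η : ℝ), (∀ p ∈ P, ‖a p‖ ≤ η) → ∀ i ≤ k, ∀ x,
      ‖iteratedFDeriv ℝ i (bumpAverage P ρ a) x‖ ≤ C * η := by
  obtain ⟨M, hM, hweight⟩ := exists_norm_iteratedFDeriv_bumpWeight_le hUD hFLC hρ k
  obtain ⟨K, hK, hsum⟩ := exists_norm_iteratedFDeriv_finsum_mem_le (F := F) hUD hRD hFLC ρ.rOut_pos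
  refine ⟨K * M, by positivity, fun a η ha i hi x => ?_⟩
  rw [mul_assoc]
  refine hsum _ (fun p _ => bumpWeight_smul_eq_zero (a p)) i
    (fun p _ => (contDiff_bumpWeight hUD hρ p).smul contDiff_const) (M * η) (fun p hp z => ?_) x
  calc ‖iteratedFDeriv ℝ i (fun z => bumpWeight P ρ p z • a p) z‖
      ≤ ‖ContinuousLinearMap.toSpanSingleton ℝ (a p)‖ * ‖iteratedFDeriv ℝ i (bumpWeight P ρ p) z‖ :=
        (ContinuousLinearMap.toSpanSingleton ℝ (a p)).norm_iteratedFDeriv_comp_left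
          (contDiff_bumpWeight hUD hρ p).contDiffAt le_rfl
    _ = ‖iteratedFDeriv ℝ i (bumpWeight P ρ p) z‖ * ‖a p‖ := by
        rw [ContinuousLinearMap.norm_toSpanSingleton, mul_comm]
    _ ≤ M * η := mul_le_mul (hweight p hp i hi z) (ha p hp) (norm_nonneg _) hM.le

lemma strongEquiv_sub_bumpAverage (hUD : UnifDiscrete P)
    (hρ : ∀ x, ∃ p ∈ P, ‖p - x‖ < ρ.rOut) {φ c : Euc n → F} (hφ : Differentiable ℝ φ)
    (hdφ : StrongEquiv P (fderiv ℝ φ)) (hc : StrongEquivOn P P c) :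
    StrongEquiv P fun x => φ x - bumpAverage P ρ (fun p => φ p - c p) x := by
  obtain ⟨R, hR, hdφR⟩ := hdφ
  obtain ⟨T, hT, hcT⟩ := hc
  have hrOut := ρ.rOut_pos
  refine ⟨ρ.rOut + (R + T), by positivity, fun x y hxy => ?_⟩
  have hxyρ : patch P ρ.rOut x = patch P ρ.rOut y := patch_eq_of_le hxy (by linarith)
  have hincr (u : Euc n) (hu : ‖u‖ < ρ.rOut) : φ (x + u) - φ x = φ (y + u) - φ y :=
    sub_eq_sub_of_fderiv_add_eq hφ
      (fun v hv => hdφR _ _ (patch_add_eq_patch_add hxy (by linarith))) hu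
  have hdiff (u : Euc n) (hu : u ∈ patch P ρ.rOut x) :
      φ (x + u) - c (x + u) = φ (y + u) - c (y + u) + (φ x - φ y) := by
    have hu' := mem_patch_iff.1 (hxyρ ▸ hu)
    rw [mem_patch_iff] at hu
    rw [hcT _ hu.2 _ hu'.2 (patch_add_eq_patch_add hxy (by linarith)),
      eq_add_of_sub_eq (hincr u hu.1)]
    abel
  have haverage : bumpAverage P ρ (fun p => φ p - c p) x =
      bumpAverage P ρ (fun p => φ p - c p) y + (φ x - φ y) := by
    rw [← bumpAverage_add_const hUD hρ]
    exact bumpAverage_eq_of_patch_eq hxyρ hdiff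
  simp only [haverage]
  abel

lemma exists_contDiff_strongEquiv_of_strongEquivOn (hUD : UnifDiscrete P) (hRD : RelDense P)
    (hFLC : FLC P) {k : ℕ} {φ : Euc n → F} (hφ : ContDiff ℝ k φ) (hφ' : Differentiable ℝ φ)
    (hdφ : StrongEquiv P (fderiv ℝ φ))
    (h : ∀ ε > 0, ∃ c, StrongEquivOn P P c ∧ ∀ p ∈ P, ‖φ p - c p‖ < ε) {ε : ℝ} (hε : 0 < ε) :
    ∃ ψ : Euc n → F, ContDiff ℝ k ψ ∧ StrongEquiv P ψ ∧
      ∀ i ≤ k, ∀ x, ‖iteratedFDeriv ℝ i (fun y => φ y - ψ y) x‖ < ε := by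
  obtain ⟨R, hR, hRP⟩ := id hRD
  let ρ : ContDiffBump (0 : Euc n) := ⟨R / 2, R, half_pos hR, half_lt_self hR⟩
  obtain ⟨C, hC, hbound⟩ :=
    exists_norm_iteratedFDeriv_bumpAverage_le (ρ := ρ) (F := F) hUD hRD hFLC hRP k
  obtain ⟨c, hc, hφc⟩ := h (ε / 2 / C) (by positivity)
  refine ⟨fun x => φ x - bumpAverage P ρ (fun p => φ p - c p) x,
    hφ.sub (contDiff_bumpAverage hUD hRP _),
    strongEquiv_sub_bumpAverage hUD hRP hφ' hdφ hc, fun i hi x => ?_⟩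
  simp only [sub_sub_cancel]
  calc ‖iteratedFDeriv ℝ i (bumpAverage P ρ fun p => φ p - c p) x‖
      ≤ C * (ε / 2 / C) := hbound _ _ (fun p hp => (hφc p hp).le) i hi x
    _ = ε / 2 := mul_div_cancel₀ _ hC.ne'
    _ < ε := half_lt_self hε

end BumpAverage

section Partitions

variable {n : ℕ} {P : Set (Euc n)}

lemma singleton_zero_inter_shiftSet_eq_iff {Q : Set (Euc n)} {x y : Euc n} :
    ({0} : Set (Euc n)) ∩ shiftSet Q x = {0} ∩ shiftSet Q y ↔ (x ∈ Q ↔ y ∈ Q) := by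
  simp [Set.ext_iff, shiftSet, sub_eq_zero]

lemma locallyDerivable_setOf_patch_eq {R : ℝ} (hR : 0 < R) (c : Set (Euc n)) :
    LocallyDerivable P {p ∈ P | patch P R p = c} := by
  refine ⟨R, hR, fun x y hxy => singleton_zero_inter_shiftSet_eq_iff.2 ?_⟩
  have hmem : x ∈ P ↔ y ∈ P := by
    simpa [mem_patch_iff, hR] using Set.ext_iff.1 hxy 0
  simp only [mem_ofPred_eq, hmem, hxy]

lemma LocallyDerivable.eventually_mem_iff {Q : Set (Euc n)} (hQ : LocallyDerivable P Q) :
    ∀ᶠ R in Filter.atTop, ∀ x y, patch P R x = patch P R y → (x ∈ Q ↔ y ∈ Q) := by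
  obtain ⟨R, -, h⟩ := hQ
  filter_upwards [Filter.eventually_ge_atTop R] with T hT x y hxy
  exact singleton_zero_inter_shiftSet_eq_iff.1 (h x y (patch_eq_of_le hxy hT))

variable {α : Type*} [PseudoMetricSpace α]

lemma exists_partition_of_strongEquivOn (hFLC : FLC P) {φ c : Euc n → α}
    (hc : StrongEquivOn P P c) {ε : ℝ} (h : ∀ p ∈ P, dist (φ p) (c p) < ε / 2) :
    ∃ N : ℕ, ∃ Q : Fin N → Set (Euc n),
      (∀ i, Q i ⊆ P) ∧ (∀ i j, i ≠ j → Disjoint (Q i) (Q j)) ∧ (⋃ i, Q i) = P ∧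
      (∀ i, LocallyDerivable P (Q i)) ∧
      ∀ i, ∀ p ∈ Q i, ∀ q ∈ Q i, dist (φ p) (φ q) < ε := by
  obtain ⟨R, hR, hcR⟩ := hc
  obtain ⟨N, s, hs, hrange⟩ := (hFLC R hR).fin_param
  refine ⟨N, fun i => {p ∈ P | patch P R p = s i}, fun i => sep_subset _ _, fun i j hij => ?_, ?_,
    fun i => locallyDerivable_setOf_patch_eq hR _, ?_⟩
  · exact Set.disjoint_left.2 fun p hp hq => hij (hs (hp.2.symm.trans hq.2))
  · refine (iUnion_subset fun i => sep_subset _ _).antisymm fun p hp => ?_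
    obtain ⟨i, hi⟩ : patch P R p ∈ range s := hrange ▸ ⟨p, hp, rfl⟩
    exact mem_iUnion.2 ⟨i, hp, hi.symm⟩
  · rintro i p ⟨hp, hps⟩ q ⟨hq, hqs⟩
    have hq' := h q hq
    rw [← hcR p hp q hq (hps.trans hqs.symm)] at hq'
    exact (dist_triangle_right _ _ (c p)).trans_lt (by linarith [h p hp])

lemma exists_strongEquivOn_of_partition {φ : Euc n → α} {ε : ℝ} {ι : Type*} [Finite ι]
    {Q : ι → Set (Euc n)} (hP : (⋃ i, Q i) = P) (hder : ∀ i, LocallyDerivable P (Q i))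
    (hφ : ∀ i, ∀ p ∈ Q i, ∀ q ∈ Q i, dist (φ p) (φ q) < ε) :
    ∃ c, StrongEquivOn P P c ∧ ∀ p ∈ P, dist (φ p) (c p) < ε := by
  obtain ⟨R, hQR, hR⟩ := ((Filter.eventually_all.2 fun i => (hder i).eventually_mem_iff).and
    (Filter.eventually_gt_atTop 0)).exists
  let rep (p : Euc n) : Euc n := Function.invFunOn (patch P R) P (patch P R p)
  refine ⟨φ ∘ rep, ⟨R, hR, fun p _ q _ hpq => ?_⟩, fun p hp => ?_⟩
  · simp only [Function.comp_apply, rep, hpq]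
  · have hrep : patch P R (rep p) = patch P R p := Function.invFunOn_eq ⟨p, hp, rfl⟩
    obtain ⟨i, hi⟩ := mem_iUnion.1 (hP ▸ hp)
    exact hφ i p hi _ ((hQR i _ _ hrep).2 hi)

end Partitions

theorem stmt4_general {n : ℕ} {F : Type*} [NormedAddCommGroup F] [NormedSpace ℝ F]
    (P : Set (Euc n)) (hUD : UnifDiscrete P) (hRD : RelDense P) (hFLC : FLC P)
    (k : ℕ) (φ : Euc n → F) (hφ : ContDiff ℝ k φ) (hφ' : Differentiable ℝ φ)
    (hdφ : StrongEquiv P (fderiv ℝ φ)) :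
    (∀ ε > 0, ∃ φε : Euc n → F, ContDiff ℝ k φε ∧ StrongEquiv P φε ∧
        ∀ i ≤ k, ∀ x : Euc n, ‖iteratedFDeriv ℝ i (fun y => φ y - φε y) x‖ < ε)
    ↔ (∀ ε > 0, ∃ N : ℕ, ∃ Q : Fin N → Set (Euc n),
        (∀ i, Q i ⊆ P) ∧ (∀ i j, i ≠ j → Disjoint (Q i) (Q j)) ∧ (⋃ i, Q i) = P ∧
        (∀ i, LocallyDerivable P (Q i)) ∧
        ∀ i, ∀ p ∈ Q i, ∀ q ∈ Q i, ‖φ p - φ q‖ < ε) := by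
  simp only [← dist_eq_norm (φ _) (φ _)]
  constructor
  · intro happrox ε hε
    obtain ⟨ψ, -, ⟨R, hR, hψR⟩, hclose⟩ := happrox (ε / 2) (half_pos hε)
    refine exists_partition_of_strongEquivOn hFLC ⟨R, hR, fun p _ q _ => hψR p q⟩ fun p _ => ?_
    simpa [dist_eq_norm] using hclose 0 (Nat.zero_le k) p
  · intro hpart ε hε
    refine exists_contDiff_strongEquiv_of_strongEquivOn hUD hRD hFLC hφ hφ' hdφ (fun δ hδ => ?_) hε
    obtain ⟨N, Q, -, -, hP, hder, hQ⟩ := hpart δ hδ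
    simpa only [dist_eq_norm] using exists_strongEquivOn_of_partition hP hder hQ

theorem stmt4 {n : ℕ} (P : Set (Euc n))
    (hUD : UnifDiscrete P) (hRD : RelDense P) (hFLC : FLC P)
    (k : ℕ) (hk : 1 ≤ k) (φ : Euc n → ℝ) (hφ : ContDiff ℝ k φ)
    (hdφ : StrongEquiv P (fderiv ℝ φ)) :
    (∀ ε > 0, ∃ φε : Euc n → ℝ, ContDiff ℝ k φε ∧ StrongEquiv P φε ∧
        ∀ i ≤ k, ∀ x : Euc n, ‖iteratedFDeriv ℝ i (fun y => φ y - φε y) x‖ < ε)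
    ↔ (∀ ε > 0, ∃ N : ℕ, ∃ Q : Fin N → Set (Euc n),
        (∀ i, Q i ⊆ P) ∧ (∀ i j, i ≠ j → Disjoint (Q i) (Q j)) ∧ (⋃ i, Q i) = P ∧
        (∀ i, LocallyDerivable P (Q i)) ∧
        ∀ i, ∀ p ∈ Q i, ∀ q ∈ Q i, |φ p - φ q| < ε) :=
  stmt4_general P hUD hRD hFLC k φ hφ
    (hφ.differentiable (Nat.cast_ne_zero.2 (Nat.one_le_iff_ne_zero.1 hk))) hdφ
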